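/- Let K ≥ 1 and let v : ℤ → ℝ be a K-periodic real potential with discrete Schrödinger operator H on ℓ²(ℤ). Then the finite section method is applicable to H (i.e. H is bijective and the finite sections (Hₙ) are stable) if and only if |tr(M⁽⁰⁾)| > 2 and, for every j ∈ {0,…,K−1}, each of the matrices M⁽ʲ⁾ and M̃⁽ʲ⁾ has its (2,1)-entry nonzero or its (1,1)-entry of absolute value greater than 1. -/

import Mathlib

/-!
Stability of `(Hₙ)` is the same as a uniform a priori estimate `‖x‖² ≤ C ‖Hₙ x‖²` for large `n`
(`schStable_iff`), and such an estimate passes to `H`, which is then bijective because it is symmetric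
(`bijective_of_unif`). So the task is to characterise the a priori estimate.

*Sufficiency.* If `|tr M⁽⁰⁾| > 2`, the monodromy matrix has a real eigenvalue `l` with `0 < |l| < 1`,
hence there is a Floquet solution `φ` of `H φ = 0` decaying to the right. The checks on `M⁽ʲ⁾` say
exactly that `φ` has no zero (`hasGauge`). The matrices `M̃⁽ʲ⁾` are the monodromy matrices of the
reflected potential, so that the checks on them provide a nowhere vanishing solution decaying to the
left. Put `μ = |l|^(1/K)` and `φ i = μ^i c i`, where `|c|` is periodic. The Wronskian of `x` with `φ`
turns the second order equation `Hₙ x = f` into two scalar contractions with factor `μ`, one read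
from right to left and one from left to right (`left_est`). Each contraction is estimated by
convexity of the square (`geo_end`, `geo_sum`). What remains is the last value of `x`. The
solutions decaying to the right and to the left bound each of the two boundary values of `x` by an
exponentially small multiple of the other one plus a multiple of `‖f‖`, which closes the estimate for
large `n` (`unifAPriori_of_gauge`).

*Necessity.* A solution of `H φ = 0`, truncated to `-n, …, n`, has a residual at the two end sites
only (`APriori.test`). If `|tr M⁽⁰⁾| ≤ 2`, a Floquet solution with multiplier of modulus one contradicts
the estimate (`trace_of_unif`). If a check fails, the solution of the corresponding half-line
Dirichlet problem decays and contradicts the estimate (`check_of_unif`).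
-/

noncomputable section

open Matrix

/-- The `n`-th (two-sided) finite section of the discrete Schrödinger operator with
potential `v`. -/
def schFinSec (v : ℤ → ℝ) (n : ℕ) : Matrix (Fin (2 * n + 1)) (Fin (2 * n + 1)) ℂ :=
  Matrix.of fun i j =>
    if (i : ℤ) = (j : ℤ) then ((v ((i : ℤ) - (n : ℤ))) : ℂ)
    else if (i : ℤ) = (j : ℤ) + 1 ∨ (j : ℤ) = (i : ℤ) + 1 then 1 else 0

/-- Stability of the sequence of two-sided finite sections. -/
def schStable (v : ℤ → ℝ) : Prop :=
  ∃ n₀ : ℕ, ∃ C : ℝ, 0 < C ∧ ∀ n : ℕ, n₀ ≤ n →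
    IsUnit (schFinSec v n) ∧
    ‖Matrix.toEuclideanCLM (𝕜 := ℂ) ((schFinSec v n)⁻¹)‖ ≤ C

/-- The transfer matrix `T(n, E) = !![E - v n, -1; 1, 0]` at energy `E`. -/
def transfer (v : ℤ → ℝ) (E : ℝ) (n : ℤ) : Matrix (Fin 2) (Fin 2) ℝ :=
  !![E - v n, -1; 1, 0]

/-- The monodromy matrix `M⁽ʲ⁾ = T(K-1+j) ⋯ T(1+j) T(j)` (at energy `0`). -/
def monodromy (v : ℤ → ℝ) (K : ℕ) (j : ℤ) : Matrix (Fin 2) (Fin 2) ℝ :=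
  (((List.range K).map fun i => transfer v 0 ((i : ℤ) + j)).reverse).prod

/-- The reversed-order monodromy matrix `M̃⁽ʲ⁾ = T(j) T(1+j) ⋯ T(K-1+j)` (at energy `0`). -/
def monodromyRev (v : ℤ → ℝ) (K : ℕ) (j : ℤ) : Matrix (Fin 2) (Fin 2) ℝ :=
  ((List.range K).map fun i => transfer v 0 ((i : ℤ) + j)).prod

/-- The test `(2,1)-entry ≠ 0 or |(1,1)-entry| > 1` for a `2 × 2` matrix. -/
def checkM (M : Matrix (Fin 2) (Fin 2) ℝ) : Prop :=
  M 1 0 ≠ 0 ∨ 1 < |M 0 0|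


/-! ### Scalar contractions `z (i+1) = μ z i + h i` -/

/-- Convexity of the square: `(μ a + (1 - μ) b)² ≤ μ a² + (1 - μ) b²` with `b = h / (1 - μ)`. -/
theorem geo_step {μ : ℝ} (h0 : 0 < μ) (h1 : μ < 1) (z w h : ℂ) (e : w = μ * z + h) :
    ‖w‖ ^ 2 ≤ μ * ‖z‖ ^ 2 + ‖h‖ ^ 2 / (1 - μ) := by
  have hn : ‖w‖ ≤ μ * ‖z‖ + ‖h‖ := by
    rw [e]; refine (norm_add_le _ _).trans ?_
    rw [norm_mul, Complex.norm_real, Real.norm_of_nonneg h0.le]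
  have h2 : 0 < 1 - μ := by linarith
  have h3 : ‖w‖ ^ 2 ≤ (μ * ‖z‖ + ‖h‖) ^ 2 := by gcongr
  refine h3.trans ?_
  have h4 : μ * ‖z‖ ^ 2 + ‖h‖ ^ 2 / (1 - μ) - (μ * ‖z‖ + ‖h‖) ^ 2
      = μ * ((1 - μ) * ‖z‖ - ‖h‖) ^ 2 / (1 - μ) := by
    field_simp; ring
  have : 0 ≤ μ * ((1 - μ) * ‖z‖ - ‖h‖) ^ 2 / (1 - μ) := by positivity
  linarith

/-- Control of the last term: the initial value enters only with the factor `μ ^ N`. -/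
theorem geo_end {μ : ℝ} (h0 : 0 < μ) (h1 : μ < 1) (z h : ℕ → ℂ) (N : ℕ)
    (e : ∀ i < N, z (i + 1) = μ * z i + h i) :
    ‖z N‖ ^ 2 ≤ μ ^ N * ‖z 0‖ ^ 2 + (∑ i ∈ Finset.range N, ‖h i‖ ^ 2) / (1 - μ) := by
  induction N with
  | zero => simp
  | succ N ih =>
    have h2 : 0 < 1 - μ := by linarith
    have i1 := ih fun i hi => e i (by omega)
    have i2 := geo_step h0 h1 _ _ _ (e N (by omega))
    have i3 : 0 ≤ (∑ i ∈ Finset.range N, ‖h i‖ ^ 2) / (1 - μ) := by positivity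
    have i4 := mul_le_mul_of_nonneg_left i1 h0.le
    rw [Finset.sum_range_succ, add_div, pow_succ μ N]
    nlinarith

/-- `ℓ²` control of the whole orbit, with constants independent of `N`. -/
theorem geo_sum {μ : ℝ} (h0 : 0 < μ) (h1 : μ < 1) (z h : ℕ → ℂ) (N : ℕ)
    (e : ∀ i < N, z (i + 1) = μ * z i + h i) :
    ∑ i ∈ Finset.range (N + 1), ‖z i‖ ^ 2 ≤
      ‖z 0‖ ^ 2 / (1 - μ) + (∑ i ∈ Finset.range N, ‖h i‖ ^ 2) / (1 - μ) ^ 2 := by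
  have h2 : 0 < 1 - μ := by linarith
  have key : ∑ i ∈ Finset.range N, ‖z (i + 1)‖ ^ 2 ≤
      μ * ∑ i ∈ Finset.range N, ‖z i‖ ^ 2 + (∑ i ∈ Finset.range N, ‖h i‖ ^ 2) / (1 - μ) := by
    rw [Finset.mul_sum, Finset.sum_div, ← Finset.sum_add_distrib]
    exact Finset.sum_le_sum fun i hi => geo_step h0 h1 _ _ _ (e i (Finset.mem_range.1 hi))
  have a1 := Finset.sum_range_succ' (fun i => ‖z i‖ ^ 2) N
  have a2 := Finset.sum_range_succ (fun i => ‖z i‖ ^ 2) N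
  set S := ∑ i ∈ Finset.range (N + 1), ‖z i‖ ^ 2
  set F := ∑ i ∈ Finset.range N, ‖h i‖ ^ 2
  have : S * (1 - μ) ≤ ‖z 0‖ ^ 2 + F / (1 - μ) := by nlinarith [sq_nonneg ‖z N‖]
  have h5 : ‖z 0‖ ^ 2 / (1 - μ) + F / (1 - μ) ^ 2 = (‖z 0‖ ^ 2 + F / (1 - μ)) / (1 - μ) := by
    field_simp
  rw [h5, le_div_iff₀ h2]; exact this

/-! ### Stability as an a priori estimate -/

/-- The residual of the three-term recurrence. Windows `-n, …, n` of `ℤ` are numbered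
`1, …, 2n+1`, so `X (i + 1)` sits at the site `i - n`, and `X 0`, `X (2n+2)` are the values at the
two sites next to the window. -/
def res (v : ℤ → ℝ) (n : ℕ) (X : ℕ → ℂ) (i : ℕ) : ℂ :=
  X (i + 2) + X i + (v ((i : ℤ) - n) : ℂ) * X (i + 1)

/-- `‖x‖² ≤ C ‖Hₙ x‖²` for all `x`; a vector is encoded by a sequence `X` which vanishes at
the two sites next to the window (see `res`). -/
def APriori (v : ℤ → ℝ) (n : ℕ) (C : ℝ) : Prop :=
  ∀ X : ℕ → ℂ, X 0 = 0 → X (2 * n + 2) = 0 →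
    ∑ i ∈ Finset.range (2 * n + 1), ‖X (i + 1)‖ ^ 2 ≤
      C * ∑ i ∈ Finset.range (2 * n + 1), ‖res v n X i‖ ^ 2

/-- The estimate `APriori v n C` with one constant `C` for all large `n`. -/
def UnifAPriori (v : ℤ → ℝ) : Prop :=
  ∃ n₀ : ℕ, ∃ C : ℝ, 0 < C ∧ ∀ n : ℕ, n₀ ≤ n → APriori v n C

theorem finSec_mulVec (v : ℤ → ℝ) (n : ℕ) (X : ℕ → ℂ) (h0 : X 0 = 0) (h1 : X (2 * n + 2) = 0)
    (i : Fin (2 * n + 1)) :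
    (schFinSec v n *ᵥ fun j => X ((j : ℕ) + 1)) i = res v n X i := by
  obtain ⟨i, hi⟩ := i
  simp only [Matrix.mulVec, dotProduct, schFinSec, Matrix.of_apply]
  rw [Fin.sum_univ_eq_sum_range (fun j => (if (i : ℤ) = (j : ℤ) then ((v ((i : ℤ) - (n : ℤ))) : ℂ)
    else if (i : ℤ) = (j : ℤ) + 1 ∨ (j : ℤ) = (i : ℤ) + 1 then 1 else 0) * X (j + 1)) (2 * n + 1)]
  have : ∀ j ∈ Finset.range (2 * n + 1),
      (if (i : ℤ) = (j : ℤ) then ((v ((i : ℤ) - (n : ℤ))) : ℂ)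
      else if (i : ℤ) = (j : ℤ) + 1 ∨ (j : ℤ) = (i : ℤ) + 1 then 1 else 0) * X (j + 1)
      = (if j = i then (v ((i : ℤ) - n) : ℂ) * X (i + 1) else 0)
        + (if j = i + 1 then X (i + 2) else 0) + (if j + 1 = i then X i else 0) := by
    intro j hj
    by_cases e1 : j = i
    · subst e1; simp
    by_cases e2 : j = i + 1
    · subst e2; simp; intro h; omega
    by_cases e3 : j + 1 = i
    · subst e3; simp; intro h; omega
    have f1 : ¬ (i : ℤ) = j := by omega
    have f2 : ¬ ((i : ℤ) = (j : ℤ) + 1 ∨ (j : ℤ) = (i : ℤ) + 1) := by omega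
    simp [e1, e2, e3, f1, f2]
  rw [Finset.sum_congr rfl this, Finset.sum_add_distrib, Finset.sum_add_distrib,
    Finset.sum_ite_eq', Finset.sum_ite_eq']
  have e3 : ∑ j ∈ Finset.range (2 * n + 1), (if j + 1 = i then X i else 0) = X i := by
    cases i with
    | zero => simp [h0]
    | succ i =>
      simp only [Nat.add_right_cancel_iff, Finset.sum_ite_eq', Finset.mem_range]
      rw [if_pos (by omega)]
  have e2 : (if i + 1 ∈ Finset.range (2 * n + 1) then X (i + 2) else 0) = X (i + 2) := by
    split_ifs with h
    · rfl
    · have : i + 2 = 2 * n + 2 := by simp at h; omega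
      rw [this, h1]
  rw [e3, e2, if_pos (by simpa using hi)]
  simp only [res]; ring

/-- Extension of a vector on the window to a sequence, by zero, in the numbering of `res`. -/
def extZ (n : ℕ) (x : Fin (2 * n + 1) → ℂ) : ℕ → ℂ
  | 0 => 0
  | i + 1 => if h : i < 2 * n + 1 then x ⟨i, h⟩ else 0

theorem extZ_zero (n : ℕ) (x : Fin (2 * n + 1) → ℂ) : extZ n x 0 = 0 := rfl
theorem extZ_last (n : ℕ) (x : Fin (2 * n + 1) → ℂ) : extZ n x (2 * n + 2) = 0 := by
  simp [extZ]
theorem extZ_fin (n : ℕ) (x : Fin (2 * n + 1) → ℂ) :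
    (fun j : Fin (2 * n + 1) => extZ n x ((j : ℕ) + 1)) = x := by
  funext j; simp only [extZ]; rw [dif_pos j.2]

theorem aPriori_iff (v : ℤ → ℝ) (n : ℕ) (C : ℝ) : APriori v n C ↔
    ∀ x : EuclideanSpace ℂ (Fin (2 * n + 1)),
      ‖x‖ ^ 2 ≤ C * ‖Matrix.toEuclideanCLM (𝕜 := ℂ) (schFinSec v n) x‖ ^ 2 := by
  constructor
  · intro h x
    have := h (extZ n x.ofLp) (extZ_zero _ _) (extZ_last _ _)
    rw [EuclideanSpace.norm_sq_eq, EuclideanSpace.norm_sq_eq]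
    rw [← Fin.sum_univ_eq_sum_range (fun i => ‖extZ n x.ofLp (i + 1)‖ ^ 2),
      ← Fin.sum_univ_eq_sum_range (fun i => ‖res v n (extZ n x.ofLp) i‖ ^ 2)] at this
    simp_rw [← finSec_mulVec v n _ (extZ_zero n x.ofLp) (extZ_last n x.ofLp), extZ_fin] at this
    simp_rw [congrFun (extZ_fin n x.ofLp)] at this
    exact this
  · intro h X h0 h1
    have := h (WithLp.toLp 2 fun j => X ((j : ℕ) + 1))
    rw [EuclideanSpace.norm_sq_eq, EuclideanSpace.norm_sq_eq] at this
    rw [← Fin.sum_univ_eq_sum_range (fun i => ‖X (i + 1)‖ ^ 2),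
      ← Fin.sum_univ_eq_sum_range (fun i => ‖res v n X i‖ ^ 2)]
    simp_rw [← finSec_mulVec v n _ h0 h1]
    exact this

/-- Square matrices with an a priori estimate are invertible, and the estimate is a bound for the
inverse. -/
theorem schStable_iff (v : ℤ → ℝ) : schStable v ↔ UnifAPriori v := by
  constructor
  · rintro ⟨n₀, C, hC, h⟩
    refine ⟨n₀, C ^ 2, by positivity, fun n hn => ?_⟩
    obtain ⟨hu, hb⟩ := h n hn
    rw [aPriori_iff]
    intro x
    set A := schFinSec v n
    have e : x = Matrix.toEuclideanCLM (𝕜 := ℂ) A⁻¹ (Matrix.toEuclideanCLM (𝕜 := ℂ) A x) := by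
      rw [← mul_apply_eq_comp, ← map_mul,
        Matrix.nonsing_inv_mul _ ((Matrix.isUnit_iff_isUnit_det _).1 hu), map_one]
      rfl
    rw [← mul_pow]
    gcongr
    conv_lhs => rw [e]
    exact ContinuousLinearMap.le_of_opNorm_le _ hb _
  · rintro ⟨n₀, C, hC, h⟩
    refine ⟨n₀, Real.sqrt C, by positivity, fun n hn => ?_⟩
    have h := (aPriori_iff v n C).1 (h n hn)
    set A := schFinSec v n
    have h' : ∀ x, ‖x‖ ≤ Real.sqrt C * ‖Matrix.toEuclideanCLM (𝕜 := ℂ) A x‖ := by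
      intro x
      rw [← abs_of_nonneg (norm_nonneg x), ← Real.sqrt_sq_eq_abs,
        ← abs_of_nonneg (norm_nonneg (Matrix.toEuclideanCLM (𝕜 := ℂ) A x)), ← Real.sqrt_sq_eq_abs,
        ← Real.sqrt_mul hC.le]
      exact Real.sqrt_le_sqrt (h x)
    have hu : IsUnit A := by
      rw [← Matrix.mulVec_injective_iff_isUnit]
      intro x y hxy
      have := h' (WithLp.toLp 2 (x - y))
      have e : Matrix.toEuclideanCLM (𝕜 := ℂ) A (WithLp.toLp 2 (x - y)) = 0 := by
        rw [Matrix.toEuclideanCLM_toLp, Matrix.mulVec_sub, hxy, sub_self]; rfl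
      rw [e, norm_zero, mul_zero, norm_le_zero_iff] at this
      have := congrArg WithLp.ofLp this
      exact sub_eq_zero.1 this
    refine ⟨hu, ContinuousLinearMap.opNorm_le_bound _ (by positivity) fun y => ?_⟩
    have e : y = Matrix.toEuclideanCLM (𝕜 := ℂ) A (Matrix.toEuclideanCLM (𝕜 := ℂ) A⁻¹ y) := by
      rw [← mul_apply_eq_comp, ← map_mul,
        Matrix.mul_nonsing_inv _ ((Matrix.isUnit_iff_isUnit_det _).1 hu), map_one]
      rfl
    conv_rhs => rw [e]
    exact h' _

/-! ### The estimate from two nowhere vanishing Floquet solutions -/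

/-- `μ ^ i * c i` solves the recurrence of the window `-n, …, n`, and `|c|` is bounded above and
away from zero. Only the solution to the right of the left end of the window is recorded. -/
def Gauged (v : ℤ → ℝ) (μ m B : ℝ) (c : ℕ → ℂ) (n : ℕ) : Prop :=
  (∀ i, m ≤ ‖c i‖) ∧ (∀ i, ‖c i‖ ≤ B) ∧
    ∀ i : ℕ, (μ : ℂ) ^ 2 * c (i + 2) + c i + μ * (v ((i : ℤ) - n) : ℂ) * c (i + 1) = 0

/-- With `φ i = μ ^ i * c i`, the Wronskian `φ i X (i+1) - φ (i+1) X i` changes by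
`φ (i+1) * res (i)` at each step. Its rescaling `P` by `μ ^ (-i)` is therefore a contraction when
read from right to left, and `X / c` is a contraction driven by `P` when read from left to right.
The value of `P` at the right end is a multiple of `X (2n+1)`, which remains as an unknown. -/
theorem left_est {v : ℤ → ℝ} {μ m B : ℝ} {c : ℕ → ℂ} {n : ℕ} (h0 : 0 < μ) (h1 : μ < 1)
    (hm : 0 < m) (hc : Gauged v μ m B c n) (X : ℕ → ℂ) (X0 : X 0 = 0) (X1 : X (2 * n + 2) = 0) :
    m ^ 2 * ‖X 1‖ ^ 2 ≤ μ ^ (2 * n + 1) * (B ^ 2 * ‖X (2 * n + 1)‖ ^ 2) +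
      B ^ 2 / (1 - μ) * ∑ i ∈ Finset.range (2 * n + 1), ‖res v n X i‖ ^ 2 ∧
    ∑ i ∈ Finset.range (2 * n + 1), ‖X (i + 1)‖ ^ 2 ≤ B ^ 2 * ((B ^ 2 / (1 - μ) * ‖X (2 * n + 1)‖ ^ 2 +
      B ^ 2 / (1 - μ) ^ 2 * ∑ i ∈ Finset.range (2 * n + 1), ‖res v n X i‖ ^ 2)
        / m ^ 4 / (1 - μ) ^ 2) := by
  obtain ⟨hcm, hcB, hrec⟩ := hc
  have h2 : 0 < 1 - μ := by linarith
  have hB : 0 < B := hm.trans_le ((hcm 0).trans (hcB 0))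
  have hc0 : ∀ i, c i ≠ 0 := fun i h => by have := hcm i; rw [h, norm_zero] at this; linarith
  set N := 2 * n + 1 with hN
  set F := ∑ i ∈ Finset.range N, ‖res v n X i‖ ^ 2 with hF
  set P : ℕ → ℂ := fun i => c i * X (i + 1) - μ * c (i + 1) * X i with hP
  set Z : ℕ → ℂ := fun i => P (N - i) with hZ
  set h : ℕ → ℂ := fun i => -(μ * c (N - i) * res v n X (N - 1 - i)) with hh
  have hPstep : ∀ i, P i = μ * (P (i + 1) - c (i + 1) * res v n X i) := by
    intro i
    simp only [hP, res]
    have := hrec i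
    linear_combination (X (i+1)) * this
  have hZstep : ∀ i < N, Z (i + 1) = μ * Z i + h i := by
    intro i hi
    obtain ⟨k, hk⟩ : ∃ k, N = i + k + 1 := ⟨N - i - 1, by omega⟩
    simp only [hZ, hh]
    rw [show N - (i + 1) = k by omega, show N - i = k + 1 by omega, show N - 1 - i = k by omega,
      hPstep k]
    ring
  have hhF : ∑ i ∈ Finset.range N, ‖h i‖ ^ 2 ≤ B ^ 2 * F := by
    rw [hF, ← Finset.sum_range_reflect (fun i => ‖res v n X i‖ ^ 2), Finset.mul_sum]
    refine Finset.sum_le_sum fun i _ => ?_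
    simp only [hh, norm_neg, norm_mul, Complex.norm_real, Real.norm_of_nonneg h0.le]
    rw [← mul_pow]
    gcongr
    calc μ * ‖c (N - i)‖ ≤ 1 * B := by gcongr; exact hcB _
      _ = B := one_mul _
  have hZ0 : ‖Z 0‖ ^ 2 ≤ B ^ 2 * ‖X N‖ ^ 2 := by
    have : Z 0 = -(μ * c (N + 1) * X N) := by
      simp only [hZ, hP, Nat.sub_zero]
      rw [show N + 1 = 2 * n + 2 by omega, X1]; ring
    rw [this, norm_neg, norm_mul, norm_mul, Complex.norm_real, Real.norm_of_nonneg h0.le, ← mul_pow]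
    gcongr
    calc μ * ‖c (N + 1)‖ ≤ 1 * B := by gcongr; exact hcB _
      _ = B := one_mul _
  have hZN : Z N = c 0 * X 1 := by
    simp [hZ, hP, X0]
  constructor
  · have e1 := geo_end h0 h1 Z h N hZstep
    have e2 : m ^ 2 * ‖X 1‖ ^ 2 ≤ ‖Z N‖ ^ 2 := by
      rw [hZN, norm_mul, ← mul_pow]
      gcongr
      exact hcm 0
    calc _ ≤ _ := e2.trans e1
      _ ≤ μ ^ N * (B ^ 2 * ‖X N‖ ^ 2) + (B ^ 2 * F) / (1 - μ) := by gcongr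
      _ = _ := by ring
  · have e1 := geo_sum h0 h1 Z h N hZstep
    have e2 : ∑ i ∈ Finset.range (N + 1), ‖Z i‖ ^ 2 = ∑ i ∈ Finset.range (N + 1), ‖P i‖ ^ 2 := by
      rw [← Finset.sum_range_reflect (fun i => ‖P i‖ ^ 2)]
      rfl
    have e3 : ∑ i ∈ Finset.range N, ‖P i‖ ^ 2 ≤ ∑ i ∈ Finset.range (N + 1), ‖P i‖ ^ 2 := by
      rw [Finset.sum_range_succ _ N]; linarith [sq_nonneg ‖P N‖]
    have e4 : ∑ i ∈ Finset.range N, ‖P i‖ ^ 2 ≤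
        B ^ 2 / (1 - μ) * ‖X N‖ ^ 2 + B ^ 2 / (1 - μ) ^ 2 * F := by
      calc _ ≤ _ := e3.trans (e2 ▸ e1)
        _ ≤ (B ^ 2 * ‖X N‖ ^ 2) / (1 - μ) + (B ^ 2 * F) / (1 - μ) ^ 2 := by gcongr
        _ = _ := by ring
    set g : ℕ → ℂ := fun i => P i / (c i * c (i + 1)) with hg
    set Y : ℕ → ℂ := fun i => X i / c i with hY
    have hYstep : ∀ i < N, Y (i + 1) = μ * Y i + g i := by
      intro i _
      simp only [hY, hg, hP]
      have := hc0 i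
      have := hc0 (i + 1)
      field_simp
      ring
    have e5 := geo_sum h0 h1 Y g N hYstep
    have e6 : ∑ i ∈ Finset.range N, ‖g i‖ ^ 2 ≤ (∑ i ∈ Finset.range N, ‖P i‖ ^ 2) / m ^ 4 := by
      rw [Finset.sum_div]
      refine Finset.sum_le_sum fun i _ => ?_
      simp only [hg, norm_div, norm_mul, div_pow]
      gcongr
      calc m ^ 4 = (m * m) ^ 2 := by ring
        _ ≤ _ := by gcongr <;> exact hcm _
    have hY0 : Y 0 = 0 := by simp [hY, X0]
    rw [hY0, norm_zero, Finset.sum_range_succ', hY0] at e5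
    simp only [norm_zero, ne_eq, OfNat.ofNat_ne_zero, not_false_eq_true, zero_pow, zero_div, zero_add,
      add_zero] at e5
    calc _ ≤ B ^ 2 * ∑ i ∈ Finset.range N, ‖Y (i + 1)‖ ^ 2 := by
          rw [Finset.mul_sum]
          refine Finset.sum_le_sum fun i _ => ?_
          rw [← mul_pow]
          gcongr
          have : X (i + 1) = c (i + 1) * Y (i + 1) := by
            simp only [hY]; have := hc0 (i + 1); field_simp
          rw [this, norm_mul]
          gcongr
          exact hcB _
      _ ≤ _ := by
          gcongr
          refine e5.trans ?_
          gcongr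
          refine e6.trans ?_
          gcongr

/-- Gauges exist for all windows, with common constants: there is a nowhere vanishing Floquet
solution decaying to the right. -/
def HasGauge (v : ℤ → ℝ) : Prop :=
  ∃ μ m B : ℝ, 0 < μ ∧ μ < 1 ∧ 0 < m ∧ ∀ n, ∃ c, Gauged v μ m B c n

/-- The potential reflected at the origin. -/
def reflPot (v : ℤ → ℝ) : ℤ → ℝ := fun k => v (-k)

theorem sum_res_refl (v : ℤ → ℝ) (n : ℕ) (X : ℕ → ℂ) :
    ∑ i ∈ Finset.range (2 * n + 1), ‖res (reflPot v) n (fun i => X (2 * n + 2 - i)) i‖ ^ 2 =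
      ∑ i ∈ Finset.range (2 * n + 1), ‖res v n X i‖ ^ 2 := by
  rw [← Finset.sum_range_reflect (fun i => ‖res v n X i‖ ^ 2)]
  refine Finset.sum_congr rfl fun i hi => ?_
  have hi := Finset.mem_range.1 hi
  obtain ⟨k, hk⟩ : ∃ k, 2 * n + 1 = i + k + 1 := ⟨2 * n - i, by omega⟩
  congr 2
  simp only [res, reflPot]
  rw [show 2 * n + 1 - 1 - i = k by omega, show 2 * n + 2 - (i + 2) = k by omega,
    show 2 * n + 2 - i = k + 2 by omega, show 2 * n + 2 - (i + 1) = k + 1 by omega,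
    show -((i : ℤ) - n) = k - n by omega]
  ring

theorem sum_X_refl (n : ℕ) (X : ℕ → ℂ) :
    ∑ i ∈ Finset.range (2 * n + 1), ‖X (2 * n + 2 - (i + 1))‖ ^ 2 =
      ∑ i ∈ Finset.range (2 * n + 1), ‖X (i + 1)‖ ^ 2 := by
  rw [← Finset.sum_range_reflect (fun i => ‖X (i + 1)‖ ^ 2)]
  refine Finset.sum_congr rfl fun i hi => ?_
  have hi := Finset.mem_range.1 hi
  congr 3
  omega

theorem reflPot_reflPot (v : ℤ → ℝ) : reflPot (reflPot v) = v := by funext k; simp [reflPot]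

theorem UnifAPriori.reflect {v : ℤ → ℝ} (h : UnifAPriori v) : UnifAPriori (reflPot v) := by
  obtain ⟨n₀, C, hC, h⟩ := h
  refine ⟨n₀, C, hC, fun n hn X X0 X1 => ?_⟩
  have := h n hn (fun i => X (2 * n + 2 - i)) (by simpa using X1) (by simpa using X0)
  have e := sum_res_refl (reflPot v) n X
  rw [reflPot_reflPot] at e
  rw [e] at this
  rwa [sum_X_refl] at this

/-- `left_est` and its mirror image bound `X 1` by a small multiple of `X (2n+1)` and vice versa,
so for large `n` both boundary values are controlled by the residual. -/
theorem unifAPriori_of_gauge {v : ℤ → ℝ} (hl : HasGauge v) (hr : HasGauge (reflPot v)) :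
    UnifAPriori v := by
  obtain ⟨μ, m, B, h0, h1, hm, hc⟩ := hl
  obtain ⟨ν, l, A, k0, k1, hl, hd⟩ := hr
  have h2 : 0 < 1 - μ := by linarith
  have k2 : 0 < 1 - ν := by linarith
  have t1 : Filter.Tendsto (fun n : ℕ => B ^ 2 / m ^ 2 * μ ^ n) Filter.atTop (nhds 0) := by
    simpa using (tendsto_pow_atTop_nhds_zero_of_lt_one h0.le h1).const_mul (B ^ 2 / m ^ 2)
  have t2 : Filter.Tendsto (fun n : ℕ => A ^ 2 / l ^ 2 * ν ^ n) Filter.atTop (nhds 0) := by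
    simpa using (tendsto_pow_atTop_nhds_zero_of_lt_one k0.le k1).const_mul (A ^ 2 / l ^ 2)
  obtain ⟨n₀, hn₀⟩ := Filter.eventually_atTop.1
    ((t1.eventually (gt_mem_nhds (show (0 : ℝ) < 1 / 2 by norm_num))).and
      (t2.eventually (gt_mem_nhds (show (0 : ℝ) < 1 / 2 by norm_num))))
  set D₁ := B ^ 2 / m ^ 2 / (1 - μ) with hD₁
  set D₂ := A ^ 2 / l ^ 2 / (1 - ν) with hD₂
  have p1 : 0 ≤ D₁ := by positivity
  have p2 : 0 ≤ D₂ := by positivity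
  set D := 2 * (D₁ + D₂) with hD
  refine ⟨n₀, B ^ 2 * ((B ^ 2 / (1 - μ) * D + B ^ 2 / (1 - μ) ^ 2) / m ^ 4 / (1 - μ) ^ 2) + 1,
    by positivity, fun n hn X X0 X1 => ?_⟩
  obtain ⟨c, hc⟩ := hc n
  obtain ⟨d, hd⟩ := hd n
  obtain ⟨a1, a2⟩ := left_est h0 h1 hm hc X X0 X1
  obtain ⟨b1, -⟩ := left_est k0 k1 hl hd (fun i => X (2 * n + 2 - i)) (by simpa using X1)
    (by simpa using X0)
  rw [sum_res_refl] at b1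
  obtain ⟨q1, q2⟩ := hn₀ (2 * n + 1) (by omega)
  simp only [show 2 * n + 2 - 1 = 2 * n + 1 by omega,
    show 2 * n + 2 - (2 * n + 1) = 1 by omega] at b1
  set F := ∑ i ∈ Finset.range (2 * n + 1), ‖res v n X i‖ ^ 2 with hF
  have pF : 0 ≤ F := by positivity
  have c1 : ‖X 1‖ ^ 2 ≤ 1 / 2 * ‖X (2 * n + 1)‖ ^ 2 + D₁ * F := by
    have : ‖X 1‖ ^ 2 ≤ B ^ 2 / m ^ 2 * μ ^ (2 * n + 1) * ‖X (2 * n + 1)‖ ^ 2 + D₁ * F := by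
      rw [← mul_le_mul_iff_right₀ (show 0 < m ^ 2 by positivity)]
      refine a1.trans (le_of_eq ?_)
      rw [hD₁]; field_simp
    refine this.trans ?_
    gcongr
  have c2 : ‖X (2 * n + 1)‖ ^ 2 ≤ 1 / 2 * ‖X 1‖ ^ 2 + D₂ * F := by
    have : ‖X (2 * n + 1)‖ ^ 2 ≤ A ^ 2 / l ^ 2 * ν ^ (2 * n + 1) * ‖X 1‖ ^ 2 + D₂ * F := by
      rw [← mul_le_mul_iff_right₀ (show 0 < l ^ 2 by positivity)]
      refine b1.trans (le_of_eq ?_)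
      rw [hD₂]; field_simp
    refine this.trans ?_
    gcongr
  have c3 : ‖X (2 * n + 1)‖ ^ 2 ≤ D * F := by
    have := mul_nonneg p1 pF
    have := mul_nonneg p2 pF
    rw [hD]
    nlinarith
  calc _ ≤ _ := a2
    _ ≤ B ^ 2 * ((B ^ 2 / (1 - μ) * (D * F) + B ^ 2 / (1 - μ) ^ 2 * F) / m ^ 4 / (1 - μ) ^ 2) := by
        gcongr
    _ = B ^ 2 * ((B ^ 2 / (1 - μ) * D + B ^ 2 / (1 - μ) ^ 2) / m ^ 4 / (1 - μ) ^ 2) * F := by ring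
    _ ≤ _ := by rw [add_mul]; linarith

/-! ### Transfer and monodromy matrices -/

/-- `φ` solves the homogeneous equation `H φ = 0` to the right of the site `j`; `φ (i + 1)` is the
value at the site `i + j`. -/
def IsSol (v : ℤ → ℝ) (j : ℤ) (φ : ℕ → ℂ) : Prop :=
  ∀ i : ℕ, φ (i + 2) + φ i + (v ((i : ℤ) + j) : ℂ) * φ (i + 1) = 0

theorem flatMap_single {α β : Type*} (l : List α) (f : α → β) :
    (l.flatMap fun a => [f a]) = l.map f := List.map_eq_flatMap.symm

/-- In the definition of `monodromy` the list `List.range K` is coerced elementwise to a list of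
integers before mapping; this is the same product with a map over natural numbers. -/
theorem monodromy_eq (v : ℤ → ℝ) (K : ℕ) (j : ℤ) : monodromy v K j =
    (((List.range K).map fun i : ℕ => transfer v 0 ((i : ℤ) + j)).reverse).prod := by
  simp [monodromy, flatMap_single, Function.comp_def]

theorem monodromyRev_eq (v : ℤ → ℝ) (K : ℕ) (j : ℤ) : monodromyRev v K j =
    ((List.range K).map fun i : ℕ => transfer v 0 ((i : ℤ) + j)).prod := by
  simp [monodromyRev, flatMap_single, Function.comp_def]

theorem monodromy_succ (v : ℤ → ℝ) (K : ℕ) (j : ℤ) :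
    monodromy v (K + 1) j = transfer v 0 ((K : ℤ) + j) * monodromy v K j := by
  simp [monodromy_eq, List.range_succ]

theorem monodromy_succ' (v : ℤ → ℝ) (K : ℕ) (j : ℤ) :
    monodromy v (K + 1) j = monodromy v K (j + 1) * transfer v 0 j := by
  simp [monodromy_eq, List.range_succ_eq_map, Function.comp_def, add_assoc, add_comm (1 : ℤ) j]

theorem monodromyRev_succ (v : ℤ → ℝ) (K : ℕ) (j : ℤ) :
    monodromyRev v (K + 1) j = monodromyRev v K j * transfer v 0 ((K : ℤ) + j) := by
  simp [monodromyRev_eq, List.range_succ]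

theorem monodromyRev_succ' (v : ℤ → ℝ) (K : ℕ) (j : ℤ) :
    monodromyRev v (K + 1) j = transfer v 0 j * monodromyRev v K (j + 1) := by
  simp [monodromyRev_eq, List.range_succ_eq_map, Function.comp_def, add_assoc, add_comm (1 : ℤ) j]

/-- The reversed products are the monodromy matrices of the reflected potential. -/
theorem monodromy_reflPot (v : ℤ → ℝ) (K : ℕ) (j : ℤ) :
    monodromy (reflPot v) K j = monodromyRev v K (1 - K - j) := by
  induction K with
  | zero => simp [monodromy, monodromyRev]
  | succ K ih =>
    rw [monodromy_succ, monodromyRev_succ', ih]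
    push_cast
    congr 1
    · simp only [transfer, reflPot]; ring_nf
    · congr 1; ring

/-- `M̃ = D Mᵀ D` with `D = diag(1, -1)`, since `Tᵀ = D T D` for each transfer matrix. -/
theorem monodromyRev_entries (v : ℤ → ℝ) (K : ℕ) (j : ℤ) :
    monodromyRev v K j 0 0 = monodromy v K j 0 0 ∧ monodromyRev v K j 1 1 = monodromy v K j 1 1 ∧
    monodromyRev v K j 0 1 = -monodromy v K j 1 0 ∧
    monodromyRev v K j 1 0 = -monodromy v K j 0 1 := by
  induction K with
  | zero => simp [monodromy, monodromyRev]
  | succ K ih =>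
    obtain ⟨h1, h2, h3, h4⟩ := ih
    rw [monodromy_succ, monodromyRev_succ]
    simp [Matrix.mul_apply, Fin.sum_univ_two, transfer, h1, h2, h3, h4]
    constructor <;> ring

theorem trace_monodromyRev (v : ℤ → ℝ) (K : ℕ) (j : ℤ) :
    (monodromyRev v K j).trace = (monodromy v K j).trace := by
  obtain ⟨h1, h2, -, -⟩ := monodromyRev_entries v K j
  rw [Matrix.trace_fin_two, Matrix.trace_fin_two, h1, h2]

theorem det_monodromy (v : ℤ → ℝ) (K : ℕ) (j : ℤ) : (monodromy v K j).det = 1 := by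
  induction K with
  | zero => simp [monodromy]
  | succ K ih => rw [monodromy_succ, Matrix.det_mul, ih]; simp [transfer, Matrix.det_fin_two]

section periodic
variable {v : ℤ → ℝ} {K : ℕ}

theorem v_add_mul (hper : ∀ n : ℤ, v (n + (K : ℤ)) = v n) (n m : ℤ) :
    v (n + m * K) = v n :=
  Function.Periodic.int_mul (f := v) (c := (K : ℤ)) hper m n

theorem reflPot_per (hper : ∀ n : ℤ, v (n + (K : ℤ)) = v n) (n : ℤ) :
    reflPot v (n + (K : ℤ)) = reflPot v n := by
  simp only [reflPot]
  rw [← hper]; congr 1; ring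

theorem monodromy_per (hper : ∀ n : ℤ, v (n + (K : ℤ)) = v n) (L : ℕ) (j m : ℤ) :
    monodromy v L (j + m * K) = monodromy v L j := by
  simp only [monodromy, transfer, ← add_assoc, v_add_mul hper]

/-- Monodromy matrices at different base points are conjugate. -/
theorem trace_monodromy_shift (hper : ∀ n : ℤ, v (n + (K : ℤ)) = v n) (j : ℤ) (k : ℕ) :
    (monodromy v K (j + k)).trace = (monodromy v K j).trace := by
  induction k with
  | zero => simp
  | succ k ih =>
    rw [← ih]
    have e := (monodromy_succ v K (j + k)).symm.trans (monodromy_succ' v K (j + k))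
    have eT : transfer v 0 ((K : ℤ) + (j + k)) = transfer v 0 (j + k) := by
      simp only [transfer]; rw [add_comm (K : ℤ), hper]
    rw [eT] at e
    have hT : IsUnit (transfer v 0 (j + k)).det := by simp [transfer, Matrix.det_fin_two]
    have : monodromy v K (j + k + 1) =
        transfer v 0 (j + k) * monodromy v K (j + k) * (transfer v 0 (j + k))⁻¹ := by
      rw [e, Matrix.mul_nonsing_inv_cancel_right _ _ hT]
    push_cast
    rw [← add_assoc, this, Matrix.trace_mul_comm, Matrix.nonsing_inv_mul_cancel_left _ _ hT]

theorem trace_reflPot (hK : 1 ≤ K) (hper : ∀ n : ℤ, v (n + (K : ℤ)) = v n) :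
    (monodromy (reflPot v) K 0).trace = (monodromy v K 0).trace := by
  rw [monodromy_reflPot, trace_monodromyRev, ← trace_monodromy_shift hper _ (K - 1)]
  congr 2
  push_cast [hK]; ring

theorem forall_lt_iff (hK : 1 ≤ K) (P : Matrix (Fin 2) (Fin 2) ℝ → Prop)
    (f : ℤ → Matrix (Fin 2) (Fin 2) ℝ) (hf : ∀ j m : ℤ, f (j + m * K) = f j) :
    (∀ j : ℕ, j < K → P (f j)) ↔ ∀ j : ℤ, P (f j) := by
  refine ⟨fun h j => ?_, fun h j _ => h j⟩
  have h0 : (0 : ℤ) < K := by omega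
  have e : j = ((j % K).toNat : ℤ) + (j / K) * K := by
    rw [Int.toNat_of_nonneg (Int.emod_nonneg _ h0.ne')]
    exact (Int.emod_add_ediv_mul j K).symm
  rw [e, hf]
  apply h
  have := Int.emod_lt_of_pos j h0
  have := Int.emod_nonneg j h0.ne'
  omega

theorem check_iff (hK : 1 ≤ K) (hper : ∀ n : ℤ, v (n + (K : ℤ)) = v n) :
    (∀ j : ℕ, j < K → checkM (monodromy v K (j : ℤ)) ∧ checkM (monodromyRev v K (j : ℤ))) ↔
      (∀ j : ℕ, checkM (monodromy v K j)) ∧ ∀ j : ℕ, checkM (monodromy (reflPot v) K j) := by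
  have h1 := fun w hw => forall_lt_iff hK checkM (monodromy w K) (monodromy_per (v := w) hw K)
  have h1' : ∀ w : ℤ → ℝ, (∀ n : ℤ, w (n + (K : ℤ)) = w n) →
      ((∀ j : ℕ, checkM (monodromy w K j)) ↔ ∀ j : ℤ, checkM (monodromy w K j)) :=
    fun w hw => ⟨fun h => (h1 w hw).1 fun j _ => h j, fun h j => h j⟩
  have e : ∀ j, monodromyRev v K j = monodromy (reflPot v) K (1 - K - j) := by
    intro j; rw [monodromy_reflPot]; congr 1; ring
  have h2 := forall_lt_iff hK checkM (monodromyRev v K) (fun j m => by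
    rw [e, e, ← monodromy_per (reflPot_per hper) K (1 - K - j) (-m)]; congr 1; ring)
  have h3 : (∀ j : ℤ, checkM (monodromyRev v K j)) ↔ ∀ j : ℤ, checkM (monodromy (reflPot v) K j) :=
    ⟨fun h j => by have := h (1 - K - j); rw [e] at this; simpa using this,
      fun h j => by rw [e]; exact h _⟩
  rw [h1' v hper, h1' _ (reflPot_per hper), ← h3, ← h2, ← h1 v hper]
  exact forall₂_and

/-! ### Floquet solutions -/

theorem IsSol.shift {j : ℤ} {φ : ℕ → ℂ} (h : IsSol v j φ) (k : ℕ) :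
    IsSol v (j + k) (fun i => φ (i + k)) := by
  intro i
  have := h (i + k)
  push_cast at this
  beta_reduce
  rw [show i + 2 + k = i + k + 2 by ring, show i + 1 + k = i + k + 1 by ring,
    show (i : ℤ) + (j + k) = i + k + j by ring]
  exact this

theorem IsSol.per (hper : ∀ n : ℤ, v (n + (K : ℤ)) = v n) {j : ℤ} {φ : ℕ → ℂ} (h : IsSol v j φ)
    (m : ℤ) : IsSol v (j + m * K) φ := by
  intro i
  rw [← add_assoc, v_add_mul hper]
  exact h i

/-- The monodromy matrix over `L` sites carries `(φ 1, φ 0)` to `(φ (L+1), φ L)`. -/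
theorem IsSol.transport {j : ℤ} {φ : ℕ → ℂ} (h : IsSol v j φ) (L : ℕ) :
    φ (L + 1) = monodromy v L j 0 0 * φ 1 + monodromy v L j 0 1 * φ 0 ∧
      φ L = monodromy v L j 1 0 * φ 1 + monodromy v L j 1 1 * φ 0 := by
  induction L with
  | zero => simp [monodromy]
  | succ L ih =>
    obtain ⟨h1, h2⟩ := ih
    rw [monodromy_succ]
    simp [Matrix.mul_apply, Fin.sum_univ_two, transfer]
    constructor
    · linear_combination h L - (v (L + j) : ℂ) * h1 - h2
    · exact h1

theorem IsSol.quasi (hper : ∀ n : ℤ, v (n + (K : ℤ)) = v n) {j : ℤ} {φ : ℕ → ℂ} (h : IsSol v j φ)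
    {l : ℂ} (h0 : φ K = l * φ 0) (h1 : φ (K + 1) = l * φ 1) (k : ℕ) : φ (k + K) = l * φ k := by
  suffices φ (k + K) = l * φ k ∧ φ (k + 1 + K) = l * φ (k + 1) from this.1
  induction k with
  | zero => simp [h0, h1, add_comm]
  | succ k ih =>
    refine ⟨ih.2, ?_⟩
    have a := h (k + K)
    have b := h k
    push_cast at a
    rw [show (k : ℤ) + K + j = k + j + K by ring, hper, show k + K + 1 = k + 1 + K by ring, ih.1, ih.2]
      at a
    rw [show k + 1 + 1 + K = k + K + 2 by ring]
    linear_combination a - l * b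

/-- The solution to the right of the site `j` with initial values `φ 0 = a`, `φ 1 = b`. -/
def solOf (v : ℤ → ℝ) (j : ℤ) (a b : ℂ) : ℕ → ℂ
  | 0 => a
  | 1 => b
  | i + 2 => -solOf v j a b i - (v ((i : ℤ) + j) : ℂ) * solOf v j a b (i + 1)

theorem isSol_solOf (v : ℤ → ℝ) (j : ℤ) (a b : ℂ) : IsSol v j (solOf v j a b) := by
  intro i
  rw [solOf]; ring

theorem IsSol.ne_zero {j : ℤ} {φ : ℕ → ℂ} (h : IsSol v j φ) (h0 : ¬ (φ 0 = 0 ∧ φ 1 = 0)) (k : ℕ) :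
    ¬ (φ k = 0 ∧ φ (k + 1) = 0) := by
  induction k with
  | zero => exact h0
  | succ k ih =>
    rintro ⟨h1, h2⟩
    refine ih ⟨?_, h1⟩
    have := h k
    rw [h1, h2] at this
    simpa using this

/-- Every root `l` of the characteristic polynomial of `M⁽⁰⁾` yields a Floquet solution with
multiplier `l`. -/
theorem exists_floquet (hper : ∀ n : ℤ, v (n + (K : ℤ)) = v n) (l : ℂ)
    (hl : l ^ 2 - (monodromy v K 0).trace * l + 1 = 0) :
    ∃ φ : ℕ → ℂ, IsSol v 0 φ ∧ (∀ k, φ (k + K) = l * φ k) ∧ ∀ k, ¬ (φ k = 0 ∧ φ (k + 1) = 0) := by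
  have hdet := det_monodromy v K 0
  rw [Matrix.det_fin_two] at hdet
  rw [Matrix.trace_fin_two] at hl
  set M := monodromy v K 0
  have hd : (M 0 0 : ℂ) * M 1 1 - M 0 1 * M 1 0 = 1 := by exact_mod_cast hdet
  have hz : (!![(M 0 0 : ℂ) - l, M 0 1; M 1 0, (M 1 1 : ℂ) - l]).det = 0 := by
    rw [Matrix.det_fin_two]
    simp only [Matrix.of_apply, Matrix.cons_val', Matrix.cons_val_zero, Matrix.cons_val_one,
      Matrix.cons_val_fin_one]
    push_cast at hl
    linear_combination hl + hd
  obtain ⟨w, hw, hMw⟩ := Matrix.exists_mulVec_eq_zero_iff.2 hz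
  have e0 := congrFun hMw 0
  have e1 := congrFun hMw 1
  simp [Matrix.mulVec, dotProduct, Fin.sum_univ_two] at e0 e1
  have hs := isSol_solOf v 0 (w 1) (w 0)
  obtain ⟨t1, t0⟩ := hs.transport K
  refine ⟨_, hs, hs.quasi hper (l := l) ?_ ?_, hs.ne_zero ?_⟩
  · rw [t0]; simp only [solOf]; linear_combination e1
  · rw [t1]; simp only [solOf]; linear_combination e0
  · simp only [solOf]
    rintro ⟨h1, h0⟩
    apply hw
    funext i
    fin_cases i <;> simp [h0, h1]

theorem periodic_bounds (hK : 1 ≤ K) (f : ℕ → ℝ) (hf : ∀ k, f (k + K) = f k) (hpos : ∀ k, 0 < f k) :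
    ∃ m B : ℝ, 0 < m ∧ ∀ k, m ≤ f k ∧ f k ≤ B := by
  have hne : (Finset.range K).Nonempty := ⟨0, by simp; omega⟩
  obtain ⟨a, -, ha⟩ := Finset.exists_min_image (Finset.range K) f hne
  obtain ⟨b, -, hb⟩ := Finset.exists_max_image (Finset.range K) f hne
  refine ⟨f a, f b, hpos a, fun k => ?_⟩
  have e : f (k % K) = f k := Function.Periodic.map_mod_nat hf k
  have hm : k % K ∈ Finset.range K := Finset.mem_range.2 (Nat.mod_lt _ (by omega))
  rw [← e]
  exact ⟨ha _ hm, hb _ hm⟩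

theorem exists_small_root {t : ℝ} (ht : 2 < |t|) :
    ∃ l : ℝ, l ≠ 0 ∧ |l| < 1 ∧ l ^ 2 - t * l + 1 = 0 := by
  have h4 : 0 ≤ t ^ 2 - 4 := by
    have := sq_abs t; nlinarith
  set s := Real.sqrt (t ^ 2 - 4) with hs
  have s0 : 0 ≤ s := Real.sqrt_nonneg _
  have s2 : s ^ 2 = t ^ 2 - 4 := Real.sq_sqrt h4
  rcases lt_abs.1 ht with h | h
  · refine ⟨(t - s) / 2, ?_, ?_, by nlinarith⟩
    · intro h0; have : s = t := by linarith
      rw [this] at s2; linarith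
    · rw [abs_lt]; constructor <;> nlinarith
  · refine ⟨(t + s) / 2, ?_, ?_, by nlinarith⟩
    · intro h0; have : s = -t := by linarith
      rw [this] at s2; nlinarith
    · rw [abs_lt]; constructor <;> nlinarith

/-- If the decaying Floquet solution vanished at a site, the first unit vector would be an
eigenvector of the monodromy matrix there, with an eigenvalue of modulus less than one. -/
theorem hasGauge (hK : 1 ≤ K) (hper : ∀ n : ℤ, v (n + (K : ℤ)) = v n)
    (ht : 2 < |(monodromy v K 0).trace|) (hc : ∀ j : ℕ, checkM (monodromy v K j)) :
    HasGauge v := by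
  obtain ⟨l, l0, l1, hl⟩ := exists_small_root ht
  obtain ⟨φ, hs, hq, hne⟩ := exists_floquet hper (l : ℂ) (by exact_mod_cast hl)
  have hφ : ∀ k, φ k ≠ 0 := by
    intro k hk
    have h1 : φ (k + 1) ≠ 0 := fun h => hne k ⟨hk, h⟩
    obtain ⟨t1, t0⟩ := (hs.shift k).transport K
    simp only [zero_add] at t1 t0
    rw [hk, mul_zero, add_zero, add_comm] at t1 t0
    rw [show k + (K + 1) = k + 1 + K by ring, hq, add_comm 1 k] at t1
    rw [hq, hk, mul_zero, add_comm 1 k] at t0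
    have e1 : monodromy v K k 0 0 = l := by exact_mod_cast (mul_right_cancel₀ h1 t1).symm
    have e0 : monodromy v K k 1 0 = 0 := by
      have := t0.symm
      rw [mul_eq_zero, or_iff_left h1] at this
      exact_mod_cast this
    rcases hc k with h | h
    · exact h e0
    · rw [e1] at h; linarith
  -- normalised so that `φ k / μ ^ k` has `K`-periodic modulus
  set μ : ℝ := |l| ^ ((K : ℝ)⁻¹) with hμ
  have lp : 0 < |l| := abs_pos.2 l0
  have hμK : μ ^ K = |l| := Real.rpow_inv_natCast_pow lp.le (by omega)
  have μ0 : 0 < μ := Real.rpow_pos_of_pos lp _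
  have μ1 : μ < 1 := Real.rpow_lt_one lp.le l1 (by positivity)
  set c : ℕ → ℂ := fun k => φ k / μ ^ k with hcdef
  have hnc : ∀ k, ‖c k‖ = ‖φ k‖ / μ ^ k := by
    intro k
    simp [hcdef, abs_of_pos μ0]
  obtain ⟨m, B, hm, hb⟩ := periodic_bounds hK (fun k => ‖c k‖) (fun k => by
      simp only [hnc, hq, norm_mul, pow_add, hμK, Complex.norm_real, Real.norm_eq_abs]
      field_simp) (fun k => by
      rw [hnc]; exact div_pos (norm_pos_iff.2 (hφ k)) (by positivity))
  -- `n * (K - 1) ≥ 0` is congruent to the left end `-n` of the window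
  refine ⟨μ, m, B, μ0, μ1, hm, fun n => ⟨fun i => c (i + n * (K - 1)), fun i => (hb _).1,
    fun i => (hb _).2, fun i => ?_⟩⟩
  obtain ⟨L, rfl⟩ : ∃ L, K = L + 1 := ⟨K - 1, by omega⟩
  simp only [Nat.add_sub_cancel]
  have e : v ((i : ℤ) - n) = v (((i + n * L : ℕ) : ℤ) + 0) := by
    rw [← v_add_mul hper ((i : ℤ) - n) n]; push_cast; congr 1; ring
  have := hs (i + n * L)
  rw [e, show i + 2 + n * L = i + n * L + 2 by ring, show i + 1 + n * L = i + n * L + 1 by ring]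
  have hμc : (μ : ℂ) ≠ 0 := by exact_mod_cast μ0.ne'
  simp only [hcdef, pow_add]
  field_simp
  linear_combination this

/-! ### Necessity of the conditions -/

/-- Truncating a solution to the window leaves a residual only at the two end sites. -/
theorem APriori.test {n : ℕ} {C : ℝ} (h : APriori v n C) (hn : 1 ≤ n) {φ : ℕ → ℂ}
    (hs : IsSol v (-n) φ) :
    ∑ i ∈ Finset.range (2 * n + 1), ‖φ (i + 1)‖ ^ 2 ≤ C * (‖φ 0‖ ^ 2 + ‖φ (2 * n + 2)‖ ^ 2) := by
  have := h (fun i => if i = 0 ∨ i = 2 * n + 2 then 0 else φ i) (by simp) (by simp)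
  have e1 : ∀ i ∈ Finset.range (2 * n + 1),
      ‖(fun i => if i = 0 ∨ i = 2 * n + 2 then 0 else φ i) (i + 1)‖ ^ 2 = ‖φ (i + 1)‖ ^ 2 := by
    intro i hi
    have := Finset.mem_range.1 hi
    simp only
    rw [if_neg (by omega)]
  have e2 : ∀ i ∈ Finset.range (2 * n + 1),
      ‖res v n (fun i => if i = 0 ∨ i = 2 * n + 2 then 0 else φ i) i‖ ^ 2 =
        (if i = 0 then ‖φ 0‖ ^ 2 else 0) + (if i = 2 * n then ‖φ (2 * n + 2)‖ ^ 2 else 0) := by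
    intro i hi
    have hi := Finset.mem_range.1 hi
    have hsi := hs i
    rw [← sub_eq_add_neg] at hsi
    simp only [res]
    rw [if_neg (show ¬ (i + 1 = 0 ∨ i + 1 = 2 * n + 2) by omega)]
    by_cases a : i = 0
    · subst a
      rw [if_neg (by omega), if_pos (by omega), if_pos rfl, if_neg (by omega), add_zero (‖φ 0‖ ^ 2),
        ← norm_neg (φ 0)]
      congr 2
      linear_combination hsi
    by_cases b : i = 2 * n
    · subst b
      rw [if_pos (by omega), if_neg (by omega), if_pos rfl, if_neg (by omega),
        zero_add (‖φ (2 * n + 2)‖ ^ 2), ← norm_neg (φ (2 * n + 2))]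
      congr 2
      linear_combination hsi
    rw [if_neg (by omega), if_neg (by omega), if_neg a, if_neg b, hsi]
    simp
  rw [Finset.sum_congr rfl e1, Finset.sum_congr rfl e2, Finset.sum_add_distrib, Finset.sum_ite_eq',
    Finset.sum_ite_eq', if_pos (by simp), if_pos (by simp)] at this
  exact this

/-- If `|tr M⁽⁰⁾| ≤ 2`, there is a Floquet solution whose multiplier has modulus one. Its truncations
have bounded residual, while their norms tend to infinity. -/
theorem trace_of_unif (hK : 1 ≤ K) (hper : ∀ n : ℤ, v (n + (K : ℤ)) = v n) (h : UnifAPriori v) :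
    2 < |(monodromy v K 0).trace| := by
  by_contra! ht
  set t := (monodromy v K 0).trace with htr
  have h4 : 0 ≤ 4 - t ^ 2 := by have := sq_abs t; nlinarith [abs_nonneg t]
  set s := Real.sqrt (4 - t ^ 2) with hs
  have s2 : s ^ 2 = 4 - t ^ 2 := Real.sq_sqrt h4
  set l : ℂ := ⟨t / 2, s / 2⟩ with hl
  have hroot : l ^ 2 - t * l + 1 = 0 := by
    apply Complex.ext <;> simp [hl, pow_two] <;> nlinarith
  have hnorm : ‖l‖ = 1 := by
    have : ‖l‖ ^ 2 = 1 := by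
      rw [Complex.sq_norm, Complex.normSq_apply]; simp only [hl]; nlinarith
    exact (pow_eq_one_iff_of_nonneg (norm_nonneg _) two_ne_zero).1 this
  obtain ⟨φ, hsol, hq, hne⟩ := exists_floquet hper l hroot
  have hqn : ∀ k, ‖φ (k + K)‖ = ‖φ k‖ := fun k => by rw [hq, norm_mul, hnorm, one_mul]
  obtain ⟨m, B, hm, hb⟩ := periodic_bounds hK (fun k => ‖φ k‖ ^ 2 + ‖φ (k + 1)‖ ^ 2)
    (fun k => by simp only [hqn, show k + K + 1 = k + 1 + K by ring]) (fun k => by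
      by_contra! h0
      refine hne k ⟨?_, ?_⟩
      · have : ‖φ k‖ ^ 2 = 0 := by nlinarith [sq_nonneg ‖φ k‖, sq_nonneg ‖φ (k + 1)‖]
        simpa using this
      · have : ‖φ (k + 1)‖ ^ 2 = 0 := by nlinarith [sq_nonneg ‖φ k‖, sq_nonneg ‖φ (k + 1)‖]
        simpa using this)
  have hB : ∀ k, ‖φ k‖ ^ 2 ≤ B := fun k => by nlinarith [(hb k).2, sq_nonneg ‖φ (k + 1)‖]
  obtain ⟨n₀, C, hC, h⟩ := h
  obtain ⟨n₁, hn₁⟩ := exists_nat_gt (C * (B + B) / m)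
  set n := max n₀ (max n₁ 1) with hn
  have hap := h n (le_max_left _ _)
  have hn1 : 1 ≤ n := (le_max_right _ _).trans (le_max_right _ _)
  have hnn : C * (B + B) / m < n :=
    hn₁.trans_le (by exact_mod_cast (le_max_left n₁ 1).trans (le_max_right _ _))
  have hsol' : IsSol v (-n) (fun i => φ (i + n * (K - 1))) := by
    have := (hsol.shift (n * (K - 1))).per hper (-n)
    convert this using 1
    push_cast [hK]; ring
  have key := hap.test hn1 hsol'
  -- consecutive sites are paired because single values of `φ` may vanish
  have lower : ∀ j : ℕ, j * m ≤ ∑ i ∈ Finset.range (2 * j + 1), ‖φ (i + 1 + n * (K - 1))‖ ^ 2 := by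
    intro j
    induction j with
    | zero => simp
    | succ j ih =>
      rw [show 2 * (j + 1) + 1 = 2 * j + 1 + 1 + 1 by ring, Finset.sum_range_succ,
        Finset.sum_range_succ]
      have := (hb (2 * j + 1 + 1 + n * (K - 1))).1
      rw [show 2 * j + 1 + 1 + n * (K - 1) + 1 = 2 * j + 1 + 1 + 1 + n * (K - 1) by ring] at this
      push_cast
      linarith
  have l1 := lower n
  rw [div_lt_iff₀ hm] at hnn
  have : C * (‖φ (0 + n * (K - 1))‖ ^ 2 + ‖φ (2 * n + 2 + n * (K - 1))‖ ^ 2) ≤ C * (B + B) := by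
    gcongr <;> exact hB _
  linarith

/-- If the check fails at `j`, the solution taking the values `0, 1` at the sites `j - 1, j` decays. Its
truncations to windows with left end congruent to `j` have residual tending to zero. -/
theorem check_of_unif (hK : 1 ≤ K) (hper : ∀ n : ℤ, v (n + (K : ℤ)) = v n) (h : UnifAPriori v)
    (j : ℕ) : checkM (monodromy v K j) := by
  have ht := trace_of_unif hK hper h
  rw [← trace_monodromy_shift hper 0 j, zero_add, Matrix.trace_fin_two] at ht
  have hd := det_monodromy v K j
  rw [Matrix.det_fin_two] at hd
  by_contra hcon
  simp only [checkM, not_or, not_not, not_lt] at hcon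
  obtain ⟨h10, h00⟩ := hcon
  have hs := isSol_solOf v j 0 1
  obtain ⟨t1, t0⟩ := hs.transport K
  set M := monodromy v K j
  set φ := solOf v j 0 1 with hφ
  have φ0 : φ 0 = 0 := rfl
  have φ1 : φ 1 = 1 := rfl
  rw [h10, mul_zero, sub_zero] at hd
  have hlt : |M 0 0| < 1 := by
    refine lt_of_le_of_ne h00 fun he => ?_
    rcases eq_or_eq_neg_of_abs_eq he with e | e <;> rw [e] at hd ht
    · rw [show M 1 1 = 1 by linarith] at ht; norm_num at ht
    · rw [show M 1 1 = -1 by linarith] at ht; norm_num at ht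
  have hq := hs.quasi hper (l := (M 0 0 : ℂ)) (by rw [t0, h10, φ0]; simp)
    (by rw [t1, φ0]; simp)
  have hpow : ∀ m r : ℕ, φ (r + m * K) = (M 0 0 : ℂ) ^ m * φ r := by
    intro m r
    induction m with
    | zero => simp
    | succ m ih =>
      rw [show r + (m + 1) * K = r + m * K + K by ring, hq, ih, pow_succ]; ring
  obtain ⟨n₀, C, hC, h⟩ := h
  set r := 2 * (j * (K - 1)) + 2 with hr
  have tend : Filter.Tendsto (fun m : ℕ => C * (|M 0 0| ^ (2 * m) * ‖φ r‖) ^ 2) Filter.atTop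
      (nhds 0) := by
    have a : Filter.Tendsto (fun m : ℕ => |M 0 0| ^ (2 * m)) Filter.atTop (nhds 0) := by
      simp_rw [pow_mul]
      exact tendsto_pow_atTop_nhds_zero_of_lt_one (by positivity)
        (pow_lt_one₀ (abs_nonneg _) hlt two_ne_zero)
    simpa using ((a.mul_const ‖φ r‖).pow 2).const_mul C
  obtain ⟨m, hm1, hm⟩ := ((tend.eventually (gt_mem_nhds one_pos)).and
    (Filter.eventually_ge_atTop (n₀ + 1))).exists
  -- `-n` is congruent to `j` modulo `K`
  set n := m * K + j * (K - 1) with hn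
  have hnm : m ≤ n := (Nat.le_mul_of_pos_right m (by omega)).trans (Nat.le_add_right _ _)
  have hsol : IsSol v (-n) φ := by
    have := hs.per hper (-(m + j))
    convert this using 1
    rw [hn]; push_cast [hK]; ring
  have key := (h n (by omega)).test (by omega) hsol
  rw [Finset.sum_range_succ', φ0, zero_add, φ1] at key
  have e : ‖φ (2 * n + 2)‖ = |M 0 0| ^ (2 * m) * ‖φ r‖ := by
    rw [show 2 * n + 2 = r + 2 * m * K by rw [hn, hr]; ring, hpow]
    simp
  rw [e] at key
  have p : 0 ≤ ∑ k ∈ Finset.range (2 * n), ‖φ (k + 1 + 1)‖ ^ 2 := by positivity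
  simp only [norm_zero, norm_one] at key
  nlinarith

end periodic

/-! ### Bijectivity of `H` -/

/-- Truncating `x` to `-n, …, n` and letting `n → ∞`, the uniform estimate gives
`‖x‖² ≤ 2 C ‖H x‖²`. So `H` is injective with closed range, and its range is dense because `H` is
symmetric: a vector orthogonal to all `H eₘ` lies in the kernel of `H`. -/
theorem bijective_of_unif {v : ℤ → ℝ} (H : lp (fun _ : ℤ => ℂ) 2 →L[ℂ] lp (fun _ : ℤ => ℂ) 2)
    (hH : ∀ x : lp (fun _ : ℤ => ℂ) 2, ∀ n : ℤ,
      H x n = x (n + 1) + x (n - 1) + (v n : ℂ) * x n) (h : UnifAPriori v) :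
    Function.Bijective H := by
  obtain ⟨n₀, C, hC, h⟩ := h
  have two : (0 : ℝ) < (2 : ENNReal).toReal := by norm_num
  have hsum : ∀ (x : lp (fun _ : ℤ => ℂ) 2) (s : Finset ℤ), ∑ k ∈ s, ‖x k‖ ^ 2 ≤ ‖x‖ ^ 2 := by
    intro x s
    have := lp.sum_rpow_le_norm_rpow two x s
    simpa using this
  have hsumm : ∀ (x : lp (fun _ : ℤ => ℂ) 2), Summable fun k => ‖x k‖ ^ 2 := by
    intro x
    have := (lp.memℓp x).summable two
    simpa using this
  have bound : ∀ x : lp (fun _ : ℤ => ℂ) 2, ‖x‖ ^ 2 ≤ 2 * C * ‖H x‖ ^ 2 := by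
    intro x
    have t1 : Filter.Tendsto (fun n : ℕ => ‖x ((n : ℤ) + 1)‖ ^ 2) Filter.atTop (nhds 0) :=
      ((hsumm x).comp_injective (i := fun n : ℕ => (n : ℤ) + 1)
        (fun a b hab => by simpa using hab)).tendsto_atTop_zero
    have t2 : Filter.Tendsto (fun n : ℕ => ‖x (-(n : ℤ) - 1)‖ ^ 2) Filter.atTop (nhds 0) :=
      ((hsumm x).comp_injective (i := fun n : ℕ => -(n : ℤ) - 1)
        (fun a b hab => by simpa using hab)).tendsto_atTop_zero
    -- the residual is `H x`, corrected at the two ends by the neighbours which were cut off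
    have fin : ∀ n : ℕ, max n₀ 1 ≤ n → ∀ s : Finset ℤ, s ⊆ Finset.Icc (-(n : ℤ)) n →
        ∑ k ∈ s, ‖x k‖ ^ 2 ≤
          2 * C * (‖H x‖ ^ 2 + ‖x (-(n : ℤ) - 1)‖ ^ 2 + ‖x ((n : ℤ) + 1)‖ ^ 2) := by
      intro n hn s hs
      have hinj : Function.Injective fun i : ℕ => (i : ℤ) - n := fun a b hab => by
        simpa using hab
      have reidx : ∀ f : ℤ → ℝ, ∑ i ∈ Finset.range (2 * n + 1), f ((i : ℤ) - n) =
          ∑ k ∈ (Finset.range (2 * n + 1)).map ⟨_, hinj⟩, f k := fun f => by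
        rw [Finset.sum_map]; rfl
      have key := h n (by omega) (fun i => if i = 0 ∨ i = 2 * n + 2 then 0 else x ((i : ℤ) - 1 - n))
        (by simp) (by simp)
      have e1 : ∀ i ∈ Finset.range (2 * n + 1),
          ‖(fun i : ℕ => if i = 0 ∨ i = 2 * n + 2 then 0 else x ((i : ℤ) - 1 - n)) (i + 1)‖ ^ 2
            = ‖x ((i : ℤ) - n)‖ ^ 2 := by
        intro i hi
        have := Finset.mem_range.1 hi
        simp only
        rw [if_neg (by omega)]
        push_cast
        congr 3; ring_nf
      have e2 : ∀ i ∈ Finset.range (2 * n + 1),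
          ‖res v n (fun i : ℕ => if i = 0 ∨ i = 2 * n + 2 then 0 else x ((i : ℤ) - 1 - n)) i‖ ^ 2 ≤
          2 * (‖H x ((i : ℤ) - n)‖ ^ 2 + (if i = 0 then ‖x (-(n : ℤ) - 1)‖ ^ 2 else 0) +
            (if i = 2 * n then ‖x ((n : ℤ) + 1)‖ ^ 2 else 0)) := by
        intro i hi
        have hi := Finset.mem_range.1 hi
        have hsq : ∀ a b : ℂ, ‖a - b‖ ^ 2 ≤ 2 * (‖a‖ ^ 2 + ‖b‖ ^ 2) := fun a b => by
          have := norm_sub_le a b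
          nlinarith [sq_nonneg (‖a‖ - ‖b‖), norm_nonneg (a - b)]
        simp only [res]
        rw [if_neg (show ¬ (i + 1 = 0 ∨ i + 1 = 2 * n + 2) by omega)]
        have hHi := hH x ((i : ℤ) - n)
        by_cases a : i = 0
        · subst a
          rw [if_neg (by omega), if_pos (by omega), if_pos rfl, if_neg (by omega),
            add_zero (_ + _)]
          convert hsq (H x (((0 : ℕ) : ℤ) - n)) (x (-(n : ℤ) - 1)) using 3
          rw [hHi]; push_cast; ring_nf
        by_cases b : i = 2 * n
        · subst b
          rw [if_pos (by omega), if_neg (by omega), if_neg (by omega), if_pos rfl, add_zero]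
          convert hsq (H x (((2 * n : ℕ) : ℤ) - n)) (x ((n : ℤ) + 1)) using 3
          rw [hHi]; push_cast; ring_nf
        rw [if_neg (by omega), if_neg (by omega), if_neg a, if_neg b, add_zero, add_zero]
        have := hsq (H x ((i : ℤ) - n)) 0
        rw [sub_zero, norm_zero, zero_pow two_ne_zero, add_zero] at this
        convert this using 3
        rw [hHi]; push_cast; ring_nf
      rw [Finset.sum_congr rfl e1, reidx fun k => ‖x k‖ ^ 2] at key
      have sub : s ⊆ (Finset.range (2 * n + 1)).map ⟨_, hinj⟩ := by
        intro k hk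
        have := Finset.mem_Icc.1 (hs hk)
        rw [Finset.mem_map]
        exact ⟨(k + n).toNat, Finset.mem_range.2 (by omega), by simp; omega⟩
      have s1 : ∑ k ∈ s, ‖x k‖ ^ 2 ≤ _ :=
        (Finset.sum_le_sum_of_subset_of_nonneg sub fun _ _ _ => sq_nonneg _).trans key
      refine s1.trans ?_
      rw [mul_comm 2 C, mul_assoc]
      gcongr
      refine (Finset.sum_le_sum e2).trans ?_
      rw [← Finset.mul_sum, Finset.sum_add_distrib, Finset.sum_add_distrib, Finset.sum_ite_eq',
        Finset.sum_ite_eq', if_pos (by simp), if_pos (by simp), reidx fun k => ‖H x k‖ ^ 2]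
      gcongr
      exact hsum _ _
    have lim : Filter.Tendsto (fun n : ℕ =>
        2 * C * (‖H x‖ ^ 2 + ‖x (-(n : ℤ) - 1)‖ ^ 2 + ‖x ((n : ℤ) + 1)‖ ^ 2)) Filter.atTop
        (nhds (2 * C * ‖H x‖ ^ 2)) := by
      simpa using ((t2.const_add (‖H x‖ ^ 2)).add t1).const_mul (2 * C)
    have hs : ∀ s : Finset ℤ, ∑ k ∈ s, ‖x k‖ ^ 2 ≤ 2 * C * ‖H x‖ ^ 2 := by
      intro s
      refine ge_of_tendsto lim ?_
      filter_upwards [Filter.eventually_ge_atTop (max n₀ 1 + ∑ k ∈ s, k.natAbs)] with n hn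
      refine fin n (by omega) s fun k hk => Finset.mem_Icc.2 ?_
      have := Finset.single_le_sum (f := fun k : ℤ => k.natAbs) (fun _ _ => Nat.zero_le _) hk
      omega
    have hn : ‖x‖ ^ 2 = ∑' k, ‖x k‖ ^ 2 := by
      have := lp.norm_rpow_eq_tsum two x
      simpa using this
    rw [hn]
    exact (hsumm x).tsum_le_of_sum_le hs
  have bound' : ∀ x : lp (fun _ : ℤ => ℂ) 2, ‖x‖ ≤ Real.sqrt (2 * C) * ‖H x‖ := by
    intro x
    rw [← Real.sqrt_sq (norm_nonneg x), ← Real.sqrt_sq (norm_nonneg (H x)),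
      ← Real.sqrt_mul (by positivity)]
    exact Real.sqrt_le_sqrt (bound x)
  have anti : AntilipschitzWith (Real.sqrt (2 * C)).toNNReal H :=
    AddMonoidHomClass.antilipschitz_of_bound H (fun x => by
      rw [Real.coe_toNNReal _ (Real.sqrt_nonneg _)]; exact bound' x)
  refine ⟨anti.injective, ?_⟩
  have hclosed : IsClosed (Set.range H) := anti.isClosed_range H.uniformContinuous
  have hcomplete : IsComplete ((LinearMap.range (H : lp (fun _ : ℤ => ℂ) 2 →ₗ[ℂ] lp (fun _ : ℤ => ℂ) 2) :
      Submodule ℂ (lp (fun _ : ℤ => ℂ) 2)) : Set (lp (fun _ : ℤ => ℂ) 2)) := by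
    rw [LinearMap.coe_range]
    exact hclosed.isComplete
  have : CompleteSpace (LinearMap.range (H : lp (fun _ : ℤ => ℂ) 2 →ₗ[ℂ] lp (fun _ : ℤ => ℂ) 2)) :=
    hcomplete.completeSpace_coe
  rw [← ContinuousLinearMap.coe_coe, ← LinearMap.range_eq_top, ← Submodule.orthogonal_eq_bot_iff,
    Submodule.eq_bot_iff]
  intro y hy
  have hy0 : H y = 0 := by
    ext m
    have hin := (Submodule.mem_orthogonal _ _).1 hy (H (lp.single 2 m (1 : ℂ))) ⟨_, rfl⟩
    have e : H (lp.single 2 m (1 : ℂ)) = lp.single 2 (m - 1) (1 : ℂ) + lp.single 2 (m + 1) (1 : ℂ)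
        + lp.single 2 m (v m : ℂ) := by
      ext k
      rw [hH]
      simp only [lp.coeFn_add, Pi.add_apply, lp.coeFn_single, Pi.single_apply]
      by_cases a : k = m
      · subst a; simp [show ¬ k = k - 1 by omega]
      · simp [a, show k + 1 = m ↔ k = m - 1 by omega, show k - 1 = m ↔ k = m + 1 by omega]
    rw [e, inner_add_left, inner_add_left, lp.inner_single_left, lp.inner_single_left,
      lp.inner_single_left] at hin
    simp at hin
    rw [hH]
    simp
    linear_combination hin
  have := bound' y
  rw [hy0, norm_zero, mul_zero] at this
  exact norm_le_zero_iff.1 this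

/-- characterisation of the applicability of the finite section method
for a two-sided `K`-periodic discrete Schrödinger operator. -/
theorem stmt4 (K : ℕ) (hK : 1 ≤ K) (v : ℤ → ℝ)
    (hper : ∀ n : ℤ, v (n + (K : ℤ)) = v n)
    (H : lp (fun _ : ℤ => ℂ) 2 →L[ℂ] lp (fun _ : ℤ => ℂ) 2)
    (hH : ∀ x : lp (fun _ : ℤ => ℂ) 2, ∀ n : ℤ,
      H x n = x (n + 1) + x (n - 1) + (v n : ℂ) * x n) :
    (Function.Bijective H ∧ schStable v) ↔
      (2 < |Matrix.trace (monodromy v K 0)| ∧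
        ∀ j : ℕ, j < K →
          checkM (monodromy v K (j : ℤ)) ∧ checkM (monodromyRev v K (j : ℤ))) := by
  rw [schStable_iff, check_iff hK hper]
  constructor
  · rintro ⟨-, h⟩
    exact ⟨trace_of_unif hK hper h, check_of_unif hK hper h,
      check_of_unif hK (reflPot_per hper) h.reflect⟩
  · rintro ⟨ht, h1, h2⟩
    have h := unifAPriori_of_gauge (hasGauge hK hper ht h1)
      (hasGauge hK (reflPot_per hper) (by rwa [trace_reflPot hK hper]) h2)
    exact ⟨bijective_of_unif H hH h, h⟩
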